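/- Let r > 0, let c be a real with 0 < c ≤ 1, let θ satisfy 0 ≤ θ ≤ π, and let ℓ, ℓ' be reals with 0 ≤ ℓ ≤ r and 0 ≤ ℓ' ≤ r. Then D_θ(c·ℓ, c·ℓ') ≥ (sinh(c·r)/sinh(r)) · D_θ(ℓ, ℓ'). -/

import Mathlib

/-- Inverse hyperbolic cosine. -/
noncomputable def arcosh (x : ℝ) : ℝ := Real.log (x + Real.sqrt (x ^ 2 - 1))

/-- `D θ ℓ ℓ'` is the distance, in the hyperbolic plane of curvature `-1`, between the far
endpoints of two geodesic segments of lengths `ℓ, ℓ'` issuing from a common vertex at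
angle `θ`. -/
noncomputable def D (θ ℓ ℓ' : ℝ) : ℝ :=
  arcosh (Real.cosh ℓ * Real.cosh ℓ' - Real.sinh ℓ * Real.sinh ℓ' * Real.cos θ)

/-!
Halving the angle in the hyperbolic law of cosines gives the convex combination
`sinh² (D θ a b / 2) = sinh² ((a - b) / 2) cos² (θ / 2) + sinh² ((a + b) / 2) sin² (θ / 2)`,
so the effect of scaling `a` and `b` by `c` can be read off term by term. Since
`sinh (c x) / sinh x` decreases in `x > 0`, each term shrinks at most by the factor `k²`, where
`k = sinh (c r) / sinh r`, as soon as `|a ± b| / 2 ≤ r`. Hence `k sinh (D / 2) ≤ sinh (D' / 2)`,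
where `D'` is the distance after scaling, and convexity of `sinh` on `[0, ∞)` gives
`sinh (k D / 2) ≤ k sinh (D / 2)`.
-/

section RealHyperbolic

open Real Set

lemma convexOn_sinh_Ici : ConvexOn ℝ (Ici 0) sinh := by
  refine MonotoneOn.convexOn_of_deriv (convex_Ici 0) continuous_sinh.continuousOn
    differentiable_sinh.differentiableOn ?_
  rw [Real.deriv_sinh]
  exact cosh_strictMonoOn.monotoneOn.mono interior_subset

lemma sinh_mul_le_mul_sinh {k x : ℝ} (hk0 : 0 ≤ k) (hk1 : k ≤ 1) (hx : 0 ≤ x) :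
    sinh (k * x) ≤ k * sinh x := by
  simpa using convexOn_sinh_Ici.2 self_mem_Ici hx (sub_nonneg.2 hk1) hk0 (sub_add_cancel 1 k)

lemma mul_cosh_mul_mul_sinh_le {c x : ℝ} (hc0 : 0 ≤ c) (hc1 : c ≤ 1) (hx : 0 ≤ x) :
    c * cosh (c * x) * sinh x ≤ sinh (c * x) * cosh x := by
  -- By the addition formulas, the claim is `(1 + c) sinh ((1 - c) x) ≤ (1 - c) sinh ((1 + c) x)`.
  have hscale : sinh ((1 - c) / (1 + c) * ((1 + c) * x)) ≤
      (1 - c) / (1 + c) * sinh ((1 + c) * x) :=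
    sinh_mul_le_mul_sinh (div_nonneg (by linarith) (by linarith))
      ((div_le_one (by linarith)).2 (by linarith)) (by positivity)
  have hsum : (1 + c) * sinh (x - c * x) ≤ (1 - c) * sinh (x + c * x) := by
    rw [show (1 - c) / (1 + c) * ((1 + c) * x) = x - c * x by field_simp,
      show (1 + c) * x = x + c * x by ring, div_mul_eq_mul_div, le_div_iff₀ (by linarith)] at hscale
    linarith
  rw [sinh_sub, sinh_add] at hsum
  linarith

lemma antitoneOn_sinh_mul_div_sinh {c : ℝ} (hc0 : 0 ≤ c) (hc1 : c ≤ 1) :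
    AntitoneOn (fun x ↦ sinh (c * x) / sinh x) (Ioi 0) := by
  have hderiv (x : ℝ) (hx : 0 < x) : HasDerivAt (fun x ↦ sinh (c * x) / sinh x)
      ((cosh (c * x) * (c * 1) * sinh x - sinh (c * x) * cosh x) / sinh x ^ 2) x :=
    ((hasDerivAt_id x).const_mul c).sinh.div (hasDerivAt_sinh x) (sinh_pos_iff.2 hx).ne'
  refine antitoneOn_of_hasDerivWithinAt_nonpos (convex_Ioi 0)
    (fun x hx ↦ (hderiv x hx).continuousAt.continuousWithinAt)
    (fun x hx ↦ (hderiv x (interior_subset hx)).hasDerivWithinAt) fun x hx ↦ ?_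
  have hx0 : 0 < x := interior_subset hx
  have hle := mul_cosh_mul_mul_sinh_le hc0 hc1 hx0.le
  exact div_nonpos_of_nonpos_of_nonneg (by linarith) (sq_nonneg _)

lemma sinh_mul_div_sinh_mul_sinh_le {c x r : ℝ} (hc0 : 0 ≤ c) (hc1 : c ≤ 1) (hx : 0 ≤ x)
    (hxr : x ≤ r) : sinh (c * r) / sinh r * sinh x ≤ sinh (c * x) := by
  rcases hx.eq_or_lt with rfl | hx_pos
  · simp
  · exact (le_div_iff₀ (sinh_pos_iff.2 hx_pos)).1
      (antitoneOn_sinh_mul_div_sinh hc0 hc1 hx_pos (hx_pos.trans_le hxr) hxr)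

lemma sq_sinh_mul_div_sinh_mul_sq_sinh_le {c x r : ℝ} (hc0 : 0 ≤ c) (hc1 : c ≤ 1) (hxr : |x| ≤ r) :
    (sinh (c * r) / sinh r) ^ 2 * sinh x ^ 2 ≤ sinh (c * x) ^ 2 := by
  have hr : 0 ≤ r := (abs_nonneg x).trans hxr
  have hk : 0 ≤ sinh (c * r) / sinh r :=
    div_nonneg (sinh_nonneg_iff.2 (by positivity)) (sinh_nonneg_iff.2 hr)
  rw [← mul_pow, sq_le_sq, abs_mul, abs_sinh, abs_sinh, abs_mul, abs_of_nonneg hk,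
    abs_of_nonneg hc0]
  exact sinh_mul_div_sinh_mul_sinh_le hc0 hc1 (abs_nonneg x) hxr

lemma cosh_eq_one_add_two_mul_sinh_half_sq (x : ℝ) : cosh x = 1 + 2 * sinh (x / 2) ^ 2 := by
  have hdouble := cosh_two_mul (x / 2)
  rw [cosh_sq, mul_div_cancel₀ x two_ne_zero] at hdouble
  linarith

end RealHyperbolic

section HyperbolicDistance

open Real

lemma cosh_mul_cosh_sub_sinh_mul_sinh_mul_cos (θ a b : ℝ) :
    cosh a * cosh b - sinh a * sinh b * cos θ =
      1 + 2 * (sinh ((a - b) / 2) ^ 2 * cos (θ / 2) ^ 2 +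
        sinh ((a + b) / 2) ^ 2 * sin (θ / 2) ^ 2) := by
  have hsub := cosh_eq_one_add_two_mul_sinh_half_sq (a - b)
  have hadd := cosh_eq_one_add_two_mul_sinh_half_sq (a + b)
  have hcos : cos θ = cos (θ / 2) ^ 2 - sin (θ / 2) ^ 2 := by
    rw [← cos_two_mul', mul_div_cancel₀ θ two_ne_zero]
  rw [cosh_sub] at hsub
  rw [cosh_add] at hadd
  linear_combination cos (θ / 2) ^ 2 * hsub + sin (θ / 2) ^ 2 * hadd - sinh a * sinh b * hcos +
    (1 - cosh a * cosh b) * cos_sq_add_sin_sq (θ / 2)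

lemma one_le_cosh_mul_cosh_sub_sinh_mul_sinh_mul_cos (θ a b : ℝ) :
    1 ≤ cosh a * cosh b - sinh a * sinh b * cos θ := by
  rw [cosh_mul_cosh_sub_sinh_mul_sinh_mul_cos]
  exact le_add_of_nonneg_right (by positivity)

lemma D_nonneg (θ a b : ℝ) : 0 ≤ D θ a b :=
  Real.arcosh_nonneg (one_le_cosh_mul_cosh_sub_sinh_mul_sinh_mul_cos θ a b)

lemma cosh_D (θ a b : ℝ) : cosh (D θ a b) = cosh a * cosh b - sinh a * sinh b * cos θ :=
  Real.cosh_arcosh (one_le_cosh_mul_cosh_sub_sinh_mul_sinh_mul_cos θ a b)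

lemma sinh_half_D_sq (θ a b : ℝ) :
    sinh (D θ a b / 2) ^ 2 =
      sinh ((a - b) / 2) ^ 2 * cos (θ / 2) ^ 2 + sinh ((a + b) / 2) ^ 2 * sin (θ / 2) ^ 2 := by
  linarith [cosh_D θ a b, cosh_eq_one_add_two_mul_sinh_half_sq (D θ a b),
    cosh_mul_cosh_sub_sinh_mul_sinh_mul_cos θ a b]

lemma mul_sinh_half_D_le {r c a b : ℝ} (θ : ℝ) (hc0 : 0 ≤ c) (hc1 : c ≤ 1)
    (hab : |a| + |b| ≤ 2 * r) :
    sinh (c * r) / sinh r * sinh (D θ a b / 2) ≤ sinh (D θ (c * a) (c * b) / 2) := by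
  have hsub : |(a - b) / 2| ≤ r := by
    rw [abs_div, abs_two]
    linarith [abs_sub a b]
  have hadd : |(a + b) / 2| ≤ r := by
    rw [abs_div, abs_two]
    linarith [abs_add_le a b]
  refine le_of_sq_le_sq ?_ (sinh_nonneg_iff.2 (div_nonneg (D_nonneg ..) zero_le_two))
  calc (sinh (c * r) / sinh r * sinh (D θ a b / 2)) ^ 2
      = (sinh (c * r) / sinh r) ^ 2 * sinh ((a - b) / 2) ^ 2 * cos (θ / 2) ^ 2 +
          (sinh (c * r) / sinh r) ^ 2 * sinh ((a + b) / 2) ^ 2 * sin (θ / 2) ^ 2 := by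
        rw [mul_pow, sinh_half_D_sq]
        ring
    _ ≤ sinh (c * ((a - b) / 2)) ^ 2 * cos (θ / 2) ^ 2 +
          sinh (c * ((a + b) / 2)) ^ 2 * sin (θ / 2) ^ 2 := by
        gcongr ?_ * _ + ?_ * _
        · exact sq_sinh_mul_div_sinh_mul_sq_sinh_le hc0 hc1 hsub
        · exact sq_sinh_mul_div_sinh_mul_sq_sinh_le hc0 hc1 hadd
    _ = sinh (D θ (c * a) (c * b) / 2) ^ 2 := by
        rw [sinh_half_D_sq, ← mul_div_assoc, ← mul_div_assoc, mul_sub, mul_add]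

end HyperbolicDistance

/-- Negative `ℓ` and `ℓ'` are lengths measured along the backward extensions of the segments. -/
theorem stmt_4_general (r c θ ℓ ℓ' : ℝ) (hr : 0 < r) (hc0 : 0 ≤ c) (hc1 : c ≤ 1)
    (hℓ : |ℓ| + |ℓ'| ≤ 2 * r) :
    Real.sinh (c * r) / Real.sinh r * D θ ℓ ℓ' ≤ D θ (c * ℓ) (c * ℓ') := by
  set k := Real.sinh (c * r) / Real.sinh r
  have hsinh_r : 0 < Real.sinh r := Real.sinh_pos_iff.2 hr
  have hk0 : 0 ≤ k := div_nonneg (Real.sinh_nonneg_iff.2 (by positivity)) hsinh_r.le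
  have hk1 : k ≤ 1 :=
    (div_le_one hsinh_r).2 (Real.sinh_le_sinh.2 (mul_le_of_le_one_left hr.le hc1))
  have hsinh : Real.sinh (k * (D θ ℓ ℓ' / 2)) ≤ Real.sinh (D θ (c * ℓ) (c * ℓ') / 2) :=
    (sinh_mul_le_mul_sinh hk0 hk1 (div_nonneg (D_nonneg ..) zero_le_two)).trans
      (mul_sinh_half_D_le θ hc0 hc1 hℓ)
  linarith [Real.sinh_le_sinh.1 hsinh]

theorem stmt_4 (r c θ ℓ ℓ' : ℝ) (hr : 0 < r) (hc0 : 0 < c) (hc1 : c ≤ 1)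
    (hθ0 : 0 ≤ θ) (hθπ : θ ≤ Real.pi)
    (hℓ0 : 0 ≤ ℓ) (hℓr : ℓ ≤ r) (hℓ'0 : 0 ≤ ℓ') (hℓ'r : ℓ' ≤ r) :
    Real.sinh (c * r) / Real.sinh r * D θ ℓ ℓ' ≤ D θ (c * ℓ) (c * ℓ') := by
  refine stmt_4_general r c θ ℓ ℓ' hr hc0.le hc1 ?_
  linarith [abs_of_nonneg hℓ0, abs_of_nonneg hℓ'0]
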